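/- Let q be a power of a prime p and let k, f be positive integers with f | k, f > 1 and gcd(k/f, q−1) = 1. Let χ, χ₁, χ₂ be the canonical additive characters of F_q, F_{q^f}, F_{q^k}, let a ∈ F_q^*, and for b ∈ F_{q^k} set Λ(b) = Σ_{x ∈ F_{q^k}} Σ_{y ∈ F_q^*} Σ_{z ∈ F_q^*} χ(ay) χ₁(y·x^{(q^k-1)/(q^f-1)}) χ₂(bzx). Let φ be a multiplicative character of F_{q^f}^* of order (q^f−1)/(q−1). Then for every b ∈ F_{q^k}^*: Λ(b) = q^f(1−q)/(q^f−1) − ((-1)^{k/f−1}(q−1)q^f/(q^f−1)) · Σ_{j=1}^{(q^f−1)/(q−1) − 1} φ^j(−1) G(φ^j, χ₁)^{k/f − 1} conj(φ^j)(b^{(q^k−1)/(q^f−1)}). -/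

import Mathlib

open scoped BigOperators

/-!
Since `N(z⁻¹x) = z⁻ᵐ N(x)` with `m = k/f` prime to `q - 1`, the substitution `x ↦ z⁻¹x` followed
by a bijective change of variables in `F_qˣ` decouples the three sums, and
`Λ(b) = -∑ₓ (∑_{w ∈ F_qˣ} χ₁(w N(x))) χ₂(bx)`. The kernel of `φ` is exactly `F_qˣ`, so averaging
over the powers of `φ` expands the inner sum in the Gauss sums `G(φʲ, χ₁)`; the remaining sums over
`x` are Gauss sums of `F_{q^k}` lifted from `F_{q^f}`, which the Hasse–Davenport relation evaluates.

For Hasse–Davenport, `g ↦ ψ(∏ roots) χ(∑ roots)` is a completely multiplicative weight on monic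
polynomials whose total over degree `n` is `1`, `G(ψ, χ)`, `0`, `0`, … for `n = 0, 1, 2, 3, …`.
Since the von Mangoldt function of `K[X]` sums over the monic divisors of `g` to `deg g`, Newton's
identities then evaluate the sums weighted by it, and in degree `[L : K]` these run over the
elements of `L` through their characteristic polynomials.
-/

section VonMangoldt

open Finset Polynomial UniqueFactorizationMonoid

variable {K : Type*} [Field K] {g P : K[X]}

open scoped Classical in
/-- The von Mangoldt function of `K[X]`: the degree of `P` at a positive power of an irreducible
polynomial `P`, and zero elsewhere. -/
noncomputable def polyVonMangoldt (h : K[X]) : ℕ :=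
  if IsPrimePow h then (radical h).natDegree else 0

lemma radical_pow_of_monic_irreducible [DecidableEq K] (hP : P.Monic) (hirr : Irreducible P)
    {r : ℕ} (hr : r ≠ 0) : radical (P ^ r) = P := by
  rw [radical_pow_of_prime hirr.prime hr, hP.normalize_eq_self]

lemma polyVonMangoldt_one : polyVonMangoldt (1 : K[X]) = 0 := if_neg not_isPrimePow_one

lemma polyVonMangoldt_pow (hP : P.Monic) (hirr : Irreducible P) {r : ℕ} (hr : r ≠ 0) :
    polyVonMangoldt (P ^ r) = P.natDegree := by
  classical
  rw [polyVonMangoldt, if_pos (hirr.prime.isPrimePow.pow hr),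
    radical_pow_of_monic_irreducible hP hirr hr]

lemma exists_eq_pow_of_monic_of_isPrimePow (hg : g.Monic) (h : IsPrimePow g) :
    ∃ P r, P.Monic ∧ Irreducible P ∧ r ≠ 0 ∧ g = P ^ r := by
  classical
  obtain ⟨Q, r, hQ, hr, rfl⟩ := h
  refine ⟨normalize Q, r, monic_normalize hQ.ne_zero, ?_, hr.ne', ?_⟩
  · exact (normalize_associated Q).symm.irreducible hQ.irreducible
  · exact hg.normalize_eq_self.symm.trans (map_pow normalizeHom Q r)

lemma pow_dvd_iff_le_count_normalizedFactors [DecidableEq K] (hg : g ≠ 0) (hP : P.Monic)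
    (hirr : Irreducible P) (r : ℕ) : P ^ r ∣ g ↔ r ≤ (normalizedFactors g).count P := by
  rw [dvd_iff_normalizedFactors_le_normalizedFactors (pow_ne_zero r hP.ne_zero) hg,
    hirr.normalizedFactors_pow, hP.normalize_eq_self, Multiset.le_count_iff_replicate_le]

lemma natDegree_eq_sum_count_mul_natDegree [DecidableEq K] (hg : g.Monic) :
    g.natDegree = ∑ P ∈ primeFactors g, (normalizedFactors g).count P * P.natDegree := by
  conv_lhs => rw [← hg.normalize_eq_self, ← prod_normalizedFactors_eq hg.ne_zero]
  rw [natDegree_multiset_prod_of_monic _ fun P hP ↦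
      ((Polynomial.mem_normalizedFactors_iff hg.ne_zero).1 hP).2.1,
    Finset.sum_multiset_map_count, toFinset_normalizedFactors]
  simp only [smul_eq_mul]

open scoped Classical in
lemma card_filter_radical_eq [DecidableEq K] (hg : g.Monic) {s : Finset K[X]}
    (hs : ∀ h, h ∈ s ↔ h.Monic ∧ h ∣ g) (hP : P ∈ primeFactors g) :
    #{h ∈ s | IsPrimePow h ∧ radical h = P} = (normalizedFactors g).count P := by
  obtain ⟨hirr, hmonic, -⟩ :=
    (Polynomial.mem_normalizedFactors_iff hg.ne_zero).1 (mem_primeFactors.1 hP)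
  have hpow := pow_dvd_iff_le_count_normalizedFactors hg.ne_zero hmonic hirr
  have himage : {h ∈ s | IsPrimePow h ∧ radical h = P} =
      (Icc 1 ((normalizedFactors g).count P)).image (P ^ ·) := by
    ext h
    simp only [mem_filter, hs, mem_image, mem_Icc]
    constructor
    · rintro ⟨⟨hh, hdvd⟩, hprime, hrad⟩
      obtain ⟨Q, r, hQ, hQirr, hr, rfl⟩ := exists_eq_pow_of_monic_of_isPrimePow hh hprime
      obtain rfl : Q = P := (radical_pow_of_monic_irreducible hQ hQirr hr).symm.trans hrad
      exact ⟨r, ⟨Nat.one_le_iff_ne_zero.2 hr, (hpow r).1 hdvd⟩, rfl⟩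
    · rintro ⟨r, ⟨hr, hle⟩, rfl⟩
      have hr0 : r ≠ 0 := Nat.one_le_iff_ne_zero.1 hr
      exact ⟨⟨hmonic.pow r, (hpow r).2 hle⟩, hirr.prime.isPrimePow.pow hr0,
        radical_pow_of_monic_irreducible hmonic hirr hr0⟩
  have hinj := pow_injective_of_not_isUnit hirr.not_isUnit hmonic.ne_zero
  rw [himage, card_image_of_injective _ hinj, Nat.card_Icc, Nat.add_sub_cancel]

lemma sum_polyVonMangoldt_of_dvd (hg : g.Monic) {s : Finset K[X]}
    (hs : ∀ h, h ∈ s ↔ h.Monic ∧ h ∣ g) : ∑ h ∈ s, polyVonMangoldt h = g.natDegree := by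
  classical
  have hmaps : ∀ h ∈ s.filter IsPrimePow, radical h ∈ primeFactors g := fun h hh ↦ by
    obtain ⟨hmem, hprime⟩ := mem_filter.1 hh
    obtain ⟨hmonic, hdvd⟩ := (hs h).1 hmem
    obtain ⟨P, r, hP, hirr, hr, rfl⟩ := exists_eq_pow_of_monic_of_isPrimePow hmonic hprime
    rw [radical_pow_of_monic_irreducible hP hirr hr, mem_primeFactors,
      Polynomial.mem_normalizedFactors_iff hg.ne_zero]
    exact ⟨hirr, hP, (dvd_pow_self P hr).trans hdvd⟩
  calc ∑ h ∈ s, polyVonMangoldt h = ∑ h ∈ s with IsPrimePow h, (radical h).natDegree := by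
        simp only [polyVonMangoldt, sum_filter]
    _ = ∑ P ∈ primeFactors g, ∑ h ∈ s with IsPrimePow h ∧ radical h = P, P.natDegree := by
        rw [← sum_fiberwise_of_maps_to hmaps]
        refine sum_congr rfl fun P _ ↦ ?_
        rw [filter_filter]
        exact sum_congr rfl fun h hh ↦ by rw [(mem_filter.1 hh).2.2]
    _ = g.natDegree := by
        rw [natDegree_eq_sum_count_mul_natDegree hg]
        refine sum_congr rfl fun P hP ↦ ?_
        rw [sum_const, card_filter_radical_eq hg hs hP, smul_eq_mul]

end VonMangoldt

section Newton

open Finset Polynomial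

variable {K R : Type*} [Field K] [Finite K] [CommRing R]

lemma finite_setOf_monic_natDegree_eq (K : Type*) [Field K] [Finite K] (n : ℕ) :
    {g : K[X] | g.Monic ∧ g.natDegree = n}.Finite := by
  have : Finite (degreeLT K (n + 1)) := .of_equiv _ (degreeLTEquiv K (n + 1)).symm.toEquiv
  refine (Set.toFinite (degreeLT K (n + 1) : Set K[X])).subset fun g hg ↦ ?_
  rw [SetLike.mem_coe, mem_degreeLT, degree_eq_natDegree hg.1.ne_zero, hg.2]
  exact_mod_cast n.lt_succ_self

/-- The finite set of monic polynomials of degree `n` over the finite field `K`. -/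
noncomputable def monicsOfDegree (K : Type*) [Field K] [Finite K] (n : ℕ) : Finset K[X] :=
  (finite_setOf_monic_natDegree_eq K n).toFinset

lemma mem_monicsOfDegree {n : ℕ} {g : K[X]} :
    g ∈ monicsOfDegree K n ↔ g.Monic ∧ g.natDegree = n := by
  simp [monicsOfDegree]

lemma monicsOfDegree_zero : monicsOfDegree K 0 = {1} := by
  ext g
  rw [mem_monicsOfDegree, mem_singleton]
  exact ⟨fun h ↦ h.1.natDegree_eq_zero.1 h.2, by rintro rfl; exact ⟨monic_one, natDegree_one⟩⟩

open scoped Classical in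
lemma natDegree_eq_sum_monicsOfDegree {g : K[X]} (hg : g.Monic) :
    g.natDegree = ∑ i ∈ range (g.natDegree + 1),
      ∑ h ∈ monicsOfDegree K i with h ∣ g, polyVonMangoldt h := by
  rw [← sum_biUnion]
  · refine (sum_polyVonMangoldt_of_dvd hg fun h ↦ ?_).symm
    simp only [mem_biUnion, mem_range, mem_filter, mem_monicsOfDegree]
    refine ⟨fun ⟨_, _, hh, hdvd⟩ ↦ ⟨hh.1, hdvd⟩, fun ⟨hh, hdvd⟩ ↦ ?_⟩
    exact ⟨h.natDegree, Nat.lt_succ_of_le (natDegree_le_of_dvd hdvd hg.ne_zero), ⟨hh, rfl⟩, hdvd⟩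
  · refine fun i _ j _ hij ↦ disjoint_left.2 fun h hi hj ↦ hij ?_
    rw [← (mem_monicsOfDegree.1 (mem_filter.1 hi).1).2,
      (mem_monicsOfDegree.1 (mem_filter.1 hj).1).2]

open scoped Classical in
lemma image_mul_monicsOfDegree {h : K[X]} (hh : h.Monic) {n : ℕ} (hn : h.natDegree ≤ n) :
    (monicsOfDegree K (n - h.natDegree)).image (h * ·) =
      {g ∈ monicsOfDegree K n | h ∣ g} := by
  ext g
  simp only [mem_image, mem_filter, mem_monicsOfDegree]
  constructor
  · rintro ⟨k, ⟨hk, hdeg⟩, rfl⟩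
    exact ⟨⟨hh.mul hk, by rw [hh.natDegree_mul hk, hdeg, Nat.add_sub_cancel' hn]⟩,
      dvd_mul_right h k⟩
  · rintro ⟨⟨hg, rfl⟩, k, rfl⟩
    have hk : k.Monic := hh.of_mul_monic_left hg
    exact ⟨k, ⟨hk, by rw [hh.natDegree_mul hk, Nat.add_sub_cancel_left]⟩, rfl⟩

variable {w : K[X] → R} (hw : ∀ g h : K[X], g.Monic → h.Monic → w (g * h) = w g * w h)
include hw

open scoped Classical in
lemma sum_monicsOfDegree_filter_dvd {h : K[X]} (hh : h.Monic) {n : ℕ} (hn : h.natDegree ≤ n) :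
    ∑ g ∈ monicsOfDegree K n with h ∣ g, w g =
      w h * ∑ k ∈ monicsOfDegree K (n - h.natDegree), w k := by
  rw [← image_mul_monicsOfDegree hh hn, sum_image fun _ _ _ _ ↦ mul_left_cancel₀ hh.ne_zero,
    mul_sum]
  exact sum_congr rfl fun k hk ↦ hw h k hh (mem_monicsOfDegree.1 hk).1

theorem natCast_mul_sum_monicsOfDegree (n : ℕ) :
    n * ∑ g ∈ monicsOfDegree K n, w g =
      ∑ i ∈ range (n + 1), (∑ h ∈ monicsOfDegree K i, polyVonMangoldt h * w h) *
        ∑ k ∈ monicsOfDegree K (n - i), w k := by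
  classical
  calc (n : R) * ∑ g ∈ monicsOfDegree K n, w g
      = ∑ g ∈ monicsOfDegree K n, ∑ i ∈ range (n + 1),
          ∑ h ∈ monicsOfDegree K i, if h ∣ g then polyVonMangoldt h * w g else 0 := by
        rw [mul_sum]
        refine sum_congr rfl fun g hg ↦ ?_
        obtain ⟨hmonic, rfl⟩ := mem_monicsOfDegree.1 hg
        conv_lhs => rw [natDegree_eq_sum_monicsOfDegree hmonic]
        simp only [Nat.cast_sum, Nat.cast_ite, Nat.cast_zero, sum_mul, sum_filter, ite_mul,
          zero_mul]
    _ = ∑ i ∈ range (n + 1), ∑ h ∈ monicsOfDegree K i,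
          polyVonMangoldt h * ∑ g ∈ monicsOfDegree K n with h ∣ g, w g := by
        rw [sum_comm]
        refine sum_congr rfl fun i _ ↦ ?_
        rw [sum_comm]
        simp only [mul_sum, sum_filter, mul_ite, mul_zero]
    _ = _ := by
        refine sum_congr rfl fun i hi ↦ ?_
        rw [sum_mul]
        refine sum_congr rfl fun h hh ↦ ?_
        obtain ⟨hmonic, rfl⟩ := mem_monicsOfDegree.1 hh
        rw [sum_monicsOfDegree_filter_dvd hw hmonic (mem_range_succ_iff.1 hi), mul_assoc]

theorem sum_polyVonMangoldt_mul_monicsOfDegree (hone : w 1 = 1)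
    (hvanish : ∀ n, 2 ≤ n → ∑ g ∈ monicsOfDegree K n, w g = 0) (n : ℕ) :
    ∑ h ∈ monicsOfDegree K (n + 1), polyVonMangoldt h * w h =
      (-1) ^ n * (∑ g ∈ monicsOfDegree K 1, w g) ^ (n + 1) := by
  have hzero : ∑ g ∈ monicsOfDegree K 0, w g = 1 := by
    rw [monicsOfDegree_zero, sum_singleton, hone]
  induction n with
  | zero =>
    have hnewton := natCast_mul_sum_monicsOfDegree hw 1
    simp only [sum_range_succ, range_zero, sum_empty, Nat.sub_self,
      monicsOfDegree_zero, sum_singleton, polyVonMangoldt_one, hone, Nat.cast_zero,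
      Nat.cast_one] at hnewton
    linear_combination -hnewton
  | succ n ih =>
    have hnewton := natCast_mul_sum_monicsOfDegree hw (n + 2)
    have hsmall : ∀ i ∈ range (n + 1), (∑ h ∈ monicsOfDegree K i, polyVonMangoldt h * w h) *
        ∑ k ∈ monicsOfDegree K (n + 2 - i), w k = 0 := fun i hi ↦ by
      rw [hvanish _ (by have := mem_range.1 hi; omega), mul_zero]
    rw [hvanish (n + 2) (by omega), sum_range_succ, sum_range_succ, sum_eq_zero hsmall, ih,
      Nat.sub_self, hzero, show n + 2 - (n + 1) = 1 by omega] at hnewton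
    linear_combination -hnewton

end Newton

section HasseDavenport

open Finset Polynomial UniqueFactorizationMonoid

variable {K R : Type*} [Field K] [CommRing R]

/-- The weight of a monic polynomial attached to the characters `ψ` and `χ`: at
`(X - x₁) ⋯ (X - xₙ)` it takes the value `ψ (x₁ ⋯ xₙ) * χ (x₁ + ⋯ + xₙ)`. -/
noncomputable def charWeight (ψ : MulChar K R) (χ : AddChar K R) (g : K[X]) : R :=
  ψ ((-1) ^ g.natDegree * g.coeff 0) * χ (-g.nextCoeff)

variable (ψ : MulChar K R) (χ : AddChar K R)

lemma charWeight_one : charWeight ψ χ 1 = 1 := by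
  simp [charWeight, nextCoeff]

lemma charWeight_X_sub_C (x : K) : charWeight ψ χ (X - C x) = ψ x * χ x := by
  simp [charWeight, nextCoeff_X_sub_C]

lemma charWeight_mul (g h : K[X]) (hg : g.Monic) (hh : h.Monic) :
    charWeight ψ χ (g * h) = charWeight ψ χ g * charWeight ψ χ h := by
  have hconst : (-1 : K) ^ (g.natDegree + h.natDegree) * (g.coeff 0 * h.coeff 0) =
      ((-1) ^ g.natDegree * g.coeff 0) * ((-1) ^ h.natDegree * h.coeff 0) := by ring
  rw [charWeight, hg.natDegree_mul hh, hg.nextCoeff_mul hh, mul_coeff_zero, neg_add,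
    AddChar.map_add_eq_mul, hconst, map_mul, mul_mul_mul_comm, charWeight, charWeight]

lemma charWeight_pow {g : K[X]} (hg : g.Monic) (r : ℕ) :
    charWeight ψ χ (g ^ r) = charWeight ψ χ g ^ r := by
  induction r with
  | zero => rw [pow_zero, pow_zero, charWeight_one]
  | succ r ih => rw [pow_succ, charWeight_mul ψ χ _ _ (hg.pow r) hg, ih, pow_succ]

lemma sum_charWeight_monicsOfDegree_one [Fintype K] :
    ∑ g ∈ monicsOfDegree K 1, charWeight ψ χ g = gaussSum ψ χ := by
  symm
  refine sum_bij (fun x _ ↦ X - C x) (fun x _ ↦ ?_) (fun x _ y _ hxy ↦ ?_) (fun g hg ↦ ?_)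
    fun x _ ↦ (charWeight_X_sub_C ψ χ x).symm
  · exact mem_monicsOfDegree.2 ⟨monic_X_sub_C x, natDegree_X_sub_C x⟩
  · exact C_injective (sub_right_injective hxy)
  · obtain ⟨hmonic, hdeg⟩ := mem_monicsOfDegree.1 hg
    refine ⟨-g.coeff 0, mem_univ _, ?_⟩
    rw [C_neg, sub_neg_eq_add, ← hmonic.eq_X_add_C hdeg]

lemma add_C_mul_X_pow_mem_monicsOfDegree [Finite K] {n : ℕ} {g : K[X]}
    (hg : g ∈ monicsOfDegree K (n + 1)) (t : K) : g + C t * X ^ n ∈ monicsOfDegree K (n + 1) := by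
  obtain ⟨hmonic, hdeg⟩ := mem_monicsOfDegree.1 hg
  have hlt : (C t * X ^ n).degree < g.degree := by
    refine (degree_C_mul_X_pow_le n t).trans_lt ?_
    rw [degree_eq_natDegree hmonic.ne_zero, hdeg]
    exact_mod_cast n.lt_succ_self
  exact mem_monicsOfDegree.2
    ⟨hmonic.add_of_left hlt, (natDegree_add_eq_left_of_degree_lt hlt).trans hdeg⟩

lemma charWeight_add_C_mul_X_pow [Finite K] {n : ℕ} (hn : n ≠ 0) {g : K[X]}
    (hg : g ∈ monicsOfDegree K (n + 1)) (t : K) :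
    charWeight ψ χ (g + C t * X ^ n) = charWeight ψ χ g * χ (-t) := by
  have hdeg := (mem_monicsOfDegree.1 hg).2
  have hdeg' := (mem_monicsOfDegree.1 (add_C_mul_X_pow_mem_monicsOfDegree hg t)).2
  have hnext : (g + C t * X ^ n).nextCoeff = g.nextCoeff + t := by
    rw [nextCoeff_of_natDegree_pos (by omega), nextCoeff_of_natDegree_pos (by omega), hdeg, hdeg']
    simp
  have hconst : (g + C t * X ^ n).coeff 0 = g.coeff 0 := by
    simp [coeff_X_pow, hn.symm]
  rw [charWeight, charWeight, hdeg, hdeg', hnext, hconst, neg_add, AddChar.map_add_eq_mul,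
    mul_assoc]

lemma sum_charWeight_monicsOfDegree_eq_zero [IsDomain R] [Finite K] {χ : AddChar K R} (hχ : χ ≠ 1)
    {n : ℕ} (hn : 2 ≤ n) : ∑ g ∈ monicsOfDegree K n, charWeight ψ χ g = 0 := by
  obtain ⟨n, rfl⟩ : ∃ m, n = m + 1 := ⟨n - 1, by omega⟩
  obtain ⟨t, ht⟩ := AddChar.ne_one_iff.1 hχ
  have htranslate : ∑ g ∈ monicsOfDegree K (n + 1), charWeight ψ χ g =
      (∑ g ∈ monicsOfDegree K (n + 1), charWeight ψ χ g) * χ t := by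
    rw [sum_mul]
    refine sum_bij' (fun g _ ↦ g + C t * X ^ n) (fun g _ ↦ g + C (-t) * X ^ n)
      (fun g hg ↦ add_C_mul_X_pow_mem_monicsOfDegree hg t)
      (fun g hg ↦ add_C_mul_X_pow_mem_monicsOfDegree hg (-t))
      (fun g _ ↦ by simp) (fun g _ ↦ by simp) fun g hg ↦ ?_
    rw [charWeight_add_C_mul_X_pow ψ χ (by omega) hg, mul_assoc, ← AddChar.map_add_eq_mul,
      neg_add_cancel, AddChar.map_zero_eq_one, mul_one]
  exact (mul_right_eq_self₀.1 htranslate.symm).resolve_left ht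

variable {L : Type*} [Field L] [Algebra K L]

lemma charWeight_minpoly_pow [FiniteDimensional K L] (x : L) :
    charWeight ψ χ (minpoly K x ^ (Module.finrank K L / (minpoly K x).natDegree)) =
      ψ (Algebra.norm K x) * χ (Algebra.trace K L x) := by
  have hx : IsIntegral K x := .of_finite K x
  have hexp : Module.finrank K L / (minpoly K x).natDegree =
      Module.finrank (IntermediateField.adjoin K {x}) L := by
    rw [← IntermediateField.adjoin.finrank hx,
      ← Module.finrank_mul_finrank K (IntermediateField.adjoin K {x}) L]
    exact Nat.mul_div_cancel_left _ Module.finrank_pos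
  have hnorm := Algebra.PowerBasis.norm_gen_eq_coeff_zero_minpoly
    (IntermediateField.adjoin.powerBasis hx)
  have htrace := (IntermediateField.adjoin.powerBasis hx).trace_gen_eq_nextCoeff_minpoly
  rw [IntermediateField.adjoin.powerBasis_gen, IntermediateField.minpoly_gen] at hnorm htrace
  rw [IntermediateField.adjoin.powerBasis_dim] at hnorm
  rw [charWeight_pow ψ χ (minpoly.monic hx), charWeight, mul_pow, ← map_pow,
    ← AddChar.map_nsmul_eq_pow, hexp, ← hnorm, ← htrace, ← Algebra.norm_eq_norm_adjoin K x,
    ← trace_eq_trace_adjoin K x]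

variable (K) in
open scoped Classical in
lemma card_filter_minpoly_eq [Finite K] [Fintype L] {P : K[X]} (hP : P.Monic)
    (hirr : Irreducible P) (hdvd : P.natDegree ∣ Module.finrank K L) :
    #{x : L | minpoly K x = P} = P.natDegree := by
  have hsplits : (P.map (algebraMap K L)).Splits := by
    have hdvd' := map_dvd (mapRingHom (algebraMap K L))
      (hirr.natDegree_dvd_iff_dvd_X_pow_card_pow_sub_X.1 hdvd)
    rw [← Module.natCard_eq_pow_finrank, map_sub, map_pow, coe_mapRingHom, map_X] at hdvd'
    exact .of_dvd splits_X_pow_nat_card_sub_X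
      (FiniteField.X_pow_card_sub_X_ne_zero L Finite.one_lt_card) hdvd'
  rw [← card_rootSet_eq_natDegree (PerfectField.separable_of_irreducible hirr) hsplits,
    ← Set.toFinset_card]
  congr 1
  ext x
  rw [mem_filter_univ, Set.mem_toFinset, mem_rootSet_of_ne hP.ne_zero]
  exact ⟨fun h ↦ h ▸ minpoly.aeval K x,
    fun h ↦ (minpoly.eq_of_irreducible_of_monic hirr h hP).symm⟩

lemma minpoly_pow_mem_monicsOfDegree [Finite K] [FiniteDimensional K L] (x : L) :
    minpoly K x ^ (Module.finrank K L / (minpoly K x).natDegree) ∈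
      monicsOfDegree K (Module.finrank K L) := by
  have hx : IsIntegral K x := .of_finite K x
  refine mem_monicsOfDegree.2 ⟨(minpoly.monic hx).pow _, ?_⟩
  rw [(minpoly.monic hx).natDegree_pow, Nat.div_mul_cancel (minpoly.degree_dvd hx)]

open scoped Classical in
lemma card_filter_minpoly_pow_eq [Finite K] [Fintype L] {h : K[X]}
    (hh : h ∈ monicsOfDegree K (Module.finrank K L)) :
    #{x : L | minpoly K x ^ (Module.finrank K L / (minpoly K x).natDegree) = h} =
      polyVonMangoldt h := by
  obtain ⟨hmonic, hdeg⟩ := mem_monicsOfDegree.1 hh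
  have hexp (x : L) : Module.finrank K L / (minpoly K x).natDegree ≠ 0 :=
    (Nat.div_pos (minpoly.natDegree_le x) (minpoly.natDegree_pos (.of_finite K x))).ne'
  by_cases hprime : IsPrimePow h
  · obtain ⟨P, r, hP, hirr, hr, rfl⟩ := exists_eq_pow_of_monic_of_isPrimePow hmonic hprime
    rw [hP.natDegree_pow] at hdeg
    rw [polyVonMangoldt_pow hP hirr hr,
      ← card_filter_minpoly_eq K (L := L) hP hirr ⟨r, by rw [← hdeg, mul_comm]⟩]
    congr 1
    ext x
    have hx : IsIntegral K x := .of_finite K x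
    rw [mem_filter_univ, mem_filter_univ]
    constructor
    · intro heq
      have hrad := congrArg radical heq
      rwa [radical_pow_of_monic_irreducible (minpoly.monic hx) (minpoly.irreducible hx) (hexp x),
        radical_pow_of_monic_irreducible hP hirr hr] at hrad
    · rintro rfl
      rw [← hdeg, Nat.mul_div_cancel _ (minpoly.natDegree_pos hx)]
  · rw [polyVonMangoldt, if_neg hprime, card_eq_zero, filter_eq_empty_iff]
    rintro x - rfl
    exact hprime ((minpoly.prime (.of_finite K x)).isPrimePow.pow (hexp x))

theorem hasse_davenport [Fintype K] [Fintype L] [IsDomain R] {χ : AddChar K R} (hχ : χ ≠ 1) :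
    ∑ x : L, ψ (Algebra.norm K x) * χ (Algebra.trace K L x) =
      (-1) ^ (Module.finrank K L - 1) * gaussSum ψ χ ^ Module.finrank K L := by
  classical
  calc ∑ x : L, ψ (Algebra.norm K x) * χ (Algebra.trace K L x)
      = ∑ h ∈ monicsOfDegree K (Module.finrank K L), polyVonMangoldt h * charWeight ψ χ h := by
        rw [← sum_fiberwise_of_maps_to fun x _ ↦
          minpoly_pow_mem_monicsOfDegree (K := K) (L := L) x]
        refine sum_congr rfl fun h hh ↦ ?_
        rw [← card_filter_minpoly_pow_eq hh, ← nsmul_eq_mul, ← sum_const]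
        refine sum_congr rfl fun x hx ↦ ?_
        rw [← charWeight_minpoly_pow, (mem_filter.1 hx).2]
    _ = _ := by
        obtain ⟨n, hn⟩ := Nat.exists_eq_add_one_of_ne_zero
          (Module.finrank_pos (R := K) (M := L)).ne'
        rw [hn, Nat.add_sub_cancel, ← sum_charWeight_monicsOfDegree_one]
        exact sum_polyVonMangoldt_mul_monicsOfDegree (charWeight_mul ψ χ) (charWeight_one ψ χ)
          (fun n hn ↦ sum_charWeight_monicsOfDegree_eq_zero ψ hχ hn) n

theorem hasse_davenport_mulShift [Fintype K] [Fintype L] [IsDomain R] {χ : AddChar K R}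
    (hχ : χ ≠ 1) {c : L} (hc : c ≠ 0) :
    ∑ x : L, ψ (Algebra.norm K x) * χ (Algebra.trace K L (c * x)) =
      ψ⁻¹ (Algebra.norm K c) *
        ((-1) ^ (Module.finrank K L - 1) * gaussSum ψ χ ^ Module.finrank K L) := by
  rw [← hasse_davenport ψ hχ, mul_sum]
  refine Fintype.sum_equiv (Equiv.mulLeft₀ c hc) _ _ fun x ↦ ?_
  rw [Equiv.mulLeft₀_apply, MulChar.inv_apply', ← mul_assoc, ← map_mul, map_mul (Algebra.norm K),
    inv_mul_cancel_left₀ (Algebra.norm_ne_zero_iff.2 hc)]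

end HasseDavenport

section GaussSum

open Finset

lemma sum_range_orderOf_pow_apply {N R : Type*} [CommMonoid N] [CommRing R] [IsDomain R]
    (φ : MulChar N R) (u : Nˣ) [Decidable (φ u = 1)] :
    ∑ j ∈ range (orderOf φ), (φ ^ j) u = if φ u = 1 then (orderOf φ : R) else 0 := by
  simp only [MulChar.pow_apply_coe]
  split_ifs with hu
  · simp only [hu, one_pow, sum_const, card_range, nsmul_eq_mul, mul_one]
  · refine (mul_eq_zero.1 ?_).resolve_left (sub_ne_zero.2 hu)
    rw [mul_geom_sum, ← MulChar.pow_apply_coe, pow_orderOf_eq_one, MulChar.one_apply_coe, sub_self]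

variable {F R : Type*} [Field F] [Fintype F] [CommRing R]

lemma gaussSum_eq_sum_units [DecidableEq F] (ψ : MulChar F R) (χ : AddChar F R) :
    gaussSum ψ χ = ∑ u : Fˣ, ψ u * χ u := by
  refine (Fintype.sum_of_injective Units.val Units.val_injective _ _ (fun x hx ↦ ?_)
    fun _ ↦ rfl).symm
  rw [MulChar.map_nonunit ψ hx, zero_mul]

variable [IsDomain R] {χ : AddChar F R}

lemma sum_units_addChar_mul [DecidableEq F] (hχ : χ ≠ 1) {a : F} (ha : a ≠ 0) :
    ∑ u : Fˣ, χ (a * u) = -1 := by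
  have hgauss := gaussSum_one_left (AddChar.IsPrimitive.of_ne_one hχ ha)
  simpa only [gaussSum_eq_sum_units, MulChar.one_apply_coe, AddChar.mulShift_apply, one_mul]
    using hgauss

lemma gaussSum_inv_mul_gaussSum {ψ : MulChar F R} (hψ : ψ ≠ 1) (hχ : χ ≠ 1) :
    gaussSum ψ⁻¹ χ * gaussSum ψ χ = ψ (-1) * Fintype.card F := by
  rw [← gaussSum_mul_gaussSum_eq_card hψ (AddChar.IsPrimitive.of_ne_one hχ),
    ← mul_gaussSum_inv_eq_gaussSum ψ⁻¹ χ, MulChar.inv_apply', inv_neg, inv_one]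
  ring

end GaussSum

section Subfield

open Finset

variable {K L R : Type*} [Field K] [Field L] [Fintype K] [Fintype L] [Algebra K L] [CommRing R]
  {φ : MulChar L R}

variable (K L) in
lemma card_sub_one_dvd_card_sub_one : Fintype.card K - 1 ∣ Fintype.card L - 1 := by
  rw [Module.card_eq_pow_finrank (K := K) (V := L)]
  exact Nat.sub_one_dvd_pow_sub_one _ _

lemma algebraMap_unitsMap_norm (u : Lˣ) :
    algebraMap K L (Units.map (Algebra.norm K) u : Kˣ) =
      (u : L) ^ ((Fintype.card L - 1) / (Fintype.card K - 1)) := by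
  rw [← Nat.card_eq_fintype_card, ← Nat.card_eq_fintype_card]
  exact FiniteField.algebraMap_norm_eq_pow

lemma apply_eq_one_iff_exists_algebraMap_eq
    (hφ : orderOf φ = (Fintype.card L - 1) / (Fintype.card K - 1)) (u : Lˣ) :
    φ u = 1 ↔ ∃ w : Kˣ, algebraMap K L w = u := by
  constructor
  · intro hu
    obtain ⟨g, hg⟩ := IsCyclic.exists_monoid_generator (α := Lˣ)
    obtain ⟨i, rfl⟩ := Submonoid.mem_powers_iff _ _ |>.1 (hg u)
    have hpow : φ ^ i = 1 := by
      refine (MulChar.eq_iff (fun x ↦ Submonoid.powers_le_zpowers g (hg x)) _ _).2 ?_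
      rw [MulChar.pow_apply_coe, ← map_pow, ← Units.val_pow_eq_pow_val, hu, MulChar.one_apply_coe]
    obtain ⟨j, rfl⟩ := orderOf_dvd_of_pow_eq_one hpow
    refine ⟨Units.map (Algebra.norm K) (g ^ j), ?_⟩
    rw [algebraMap_unitsMap_norm, ← hφ, ← Units.val_pow_eq_pow_val, ← pow_mul, mul_comm]
  · rintro ⟨w, hw⟩
    obtain ⟨v, rfl⟩ := FiniteField.unitsMap_norm_surjective K L w
    rw [← hw, algebraMap_unitsMap_norm, ← hφ, map_pow, ← MulChar.pow_apply_coe, pow_orderOf_eq_one,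
      MulChar.one_apply_coe]

variable [IsDomain R] [DecidableEq K]

lemma sum_range_orderOf_gaussSum_pow
    (hφ : orderOf φ = (Fintype.card L - 1) / (Fintype.card K - 1)) (χ : AddChar L R) :
    ∑ j ∈ range (orderOf φ), gaussSum (φ ^ j) χ =
      orderOf φ * ∑ w : Kˣ, χ (algebraMap K L w) := by
  classical
  have hinj : Function.Injective (Units.map (algebraMap K L : K →* L)) :=
    Units.map_injective (algebraMap K L).injective
  calc ∑ j ∈ range (orderOf φ), gaussSum (φ ^ j) χ
      = ∑ u : Lˣ, (∑ j ∈ range (orderOf φ), (φ ^ j) u) * χ u := by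
        simp only [gaussSum_eq_sum_units, sum_mul]
        exact sum_comm
    _ = ∑ u : Lˣ, (if φ u = 1 then (orderOf φ : R) else 0) * χ u := by
        simp only [sum_range_orderOf_pow_apply]
    _ = ∑ w : Kˣ, orderOf φ * χ (algebraMap K L w) := by
        refine (Fintype.sum_of_injective _ hinj _ _ (fun u hu ↦ ?_) fun w ↦ ?_).symm
        · rw [if_neg, zero_mul]
          rw [apply_eq_one_iff_exists_algebraMap_eq hφ]
          exact fun ⟨w, hw⟩ ↦ hu ⟨w, Units.ext hw⟩
        · rw [if_pos ((apply_eq_one_iff_exists_algebraMap_eq hφ _).2 ⟨w, rfl⟩)]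
          rfl
    _ = _ := (mul_sum _ _ _).symm

lemma orderOf_mul_sum_units_addChar_algebraMap_mul [DecidableEq L]
    (hφ : orderOf φ = (Fintype.card L - 1) / (Fintype.card K - 1)) (χ : AddChar L R) (t : L) :
    orderOf φ * ∑ w : Kˣ, χ (algebraMap K L w * t) =
      (if t = 0 then (Fintype.card L - 1 : R) else 0) +
        ∑ j ∈ range (orderOf φ), gaussSum (φ ^ j)⁻¹ χ * (φ ^ j) t := by
  split_ifs with ht
  · have hcard : (orderOf φ * Fintype.card Kˣ : R) = Fintype.card L - 1 := by
      rw [Fintype.card_units, hφ, ← Nat.cast_mul,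
        Nat.div_mul_cancel (card_sub_one_dvd_card_sub_one K L), Nat.cast_pred Fintype.card_pos]
    simp only [ht, mul_zero, AddChar.map_zero_eq_one, sum_const, card_univ, nsmul_one, hcard,
      MulChar.map_zero, smul_zero, add_zero]
  · obtain ⟨u, rfl⟩ := Ne.isUnit ht
    have hexpand := sum_range_orderOf_gaussSum_pow (φ := φ⁻¹) (by rw [orderOf_inv, hφ])
      (χ.mulShift u)
    simp only [orderOf_inv, gaussSum_mulShift_eq, AddChar.mulShift_apply, inv_pow, inv_inv]
      at hexpand
    simp only [zero_add, mul_comm _ (u : L), ← hexpand, mul_comm _ ((φ ^ _) (u : L))]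

end Subfield

section Main

open Finset

variable {K L M R : Type*} [Field K] [Field L] [Field M] [Algebra K L] [Algebra L M] [CommRing R]

lemma norm_algebraMap_mul [Algebra K M] [IsScalarTower K L M] (z : K) (x : M) :
    Algebra.norm L (algebraMap K M z * x) =
      algebraMap K L (z ^ Module.finrank L M) * Algebra.norm L x := by
  rw [map_mul, IsScalarTower.algebraMap_apply K L M, Algebra.norm_algebraMap, map_pow]

variable [Fintype K] [DecidableEq K] [Fintype M]

lemma sum_sum_sum_mul_norm_mul [Algebra K M] [IsScalarTower K L M]
    (hcop : (Module.finrank L M).Coprime (Fintype.card K - 1))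
    (g : Kˣ → R) (F : L → R) (H : M → R) :
    ∑ x : M, ∑ y : Kˣ, ∑ z : Kˣ,
        g y * F (algebraMap K L y * Algebra.norm L x) * H (algebraMap K M z * x) =
      (∑ y, g y) * ∑ x : M, (∑ w : Kˣ, F (algebraMap K L w * Algebra.norm L x)) * H x := by
  have hcop' : (Nat.card Kˣ).Coprime (Module.finrank L M) := by
    rw [Nat.card_eq_fintype_card, Fintype.card_units]
    exact hcop.symm
  have hrescale (y z : Kˣ) :
      ∑ x : M, F (algebraMap K L y * Algebra.norm L x) * H (algebraMap K M z * x) =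
        ∑ x : M, F (algebraMap K L (y * (z ^ Module.finrank L M)⁻¹ : Kˣ) * Algebra.norm L x) *
          H x := by
    have hz : algebraMap K M z ≠ 0 := by simp
    refine Fintype.sum_equiv (Equiv.mulLeft₀ _ hz) _ _ fun x ↦ ?_
    rw [Equiv.mulLeft₀_apply, norm_algebraMap_mul, ← mul_assoc, ← map_mul,
      ← Units.val_pow_eq_pow_val, ← Units.val_mul, inv_mul_cancel_right]
  have hreindex (y : Kˣ) (x : M) :
      ∑ z : Kˣ, F (algebraMap K L (y * (z ^ Module.finrank L M)⁻¹ : Kˣ) * Algebra.norm L x) =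
        ∑ w : Kˣ, F (algebraMap K L w * Algebra.norm L x) :=
    Fintype.sum_equiv ((powCoprime hcop').trans ((Equiv.inv Kˣ).trans (Equiv.mulLeft y)))
      _ _ fun _ ↦ rfl
  calc _ = ∑ y : Kˣ, g y * ∑ z : Kˣ, ∑ x : M,
        F (algebraMap K L y * Algebra.norm L x) * H (algebraMap K M z * x) := by
        rw [sum_comm]
        refine sum_congr rfl fun y _ ↦ ?_
        rw [sum_comm, mul_sum]
        simp only [mul_sum, mul_assoc]
    _ = _ := by
        rw [sum_mul]
        refine sum_congr rfl fun y _ ↦ ?_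
        simp only [hrescale]
        rw [sum_comm]
        simp only [← sum_mul, hreindex]

variable [Fintype L] [IsDomain R] {φ : MulChar L R} {χ₁ : AddChar L R}

lemma orderOf_mul_sum_sum_addChar_norm_mul_trace
    (hφ : orderOf φ = (Fintype.card L - 1) / (Fintype.card K - 1)) (hχ₁ : χ₁ ≠ 1)
    {b : M} (hb : b ≠ 0) :
    orderOf φ * ∑ x : M, (∑ w : Kˣ, χ₁ (algebraMap K L w * Algebra.norm L x)) *
        χ₁ (Algebra.trace L M (b * x)) =
      Fintype.card L - 1 + ∑ j ∈ range (orderOf φ), gaussSum (φ ^ j)⁻¹ χ₁ *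
        ((φ ^ j)⁻¹ (Algebra.norm L b) *
          ((-1) ^ (Module.finrank L M - 1) * gaussSum (φ ^ j) χ₁ ^ Module.finrank L M)) := by
  classical
  calc _ = ∑ x : M, ((if x = 0 then (Fintype.card L - 1 : R) else 0) +
          ∑ j ∈ range (orderOf φ), gaussSum (φ ^ j)⁻¹ χ₁ * (φ ^ j) (Algebra.norm L x)) *
            χ₁ (Algebra.trace L M (b * x)) := by
        simp only [mul_sum, ← mul_assoc, orderOf_mul_sum_units_addChar_algebraMap_mul hφ,
          Algebra.norm_eq_zero_iff]
    _ = _ := by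
        simp only [add_mul, sum_add_distrib, ite_mul, zero_mul, sum_ite_eq', mem_univ, if_true,
          mul_zero, map_zero, AddChar.map_zero_eq_one, mul_one, sum_mul, mul_assoc]
        rw [sum_comm]
        simp only [← mul_sum, hasse_davenport_mulShift _ hχ₁ hb]

lemma sum_range_gaussSum_inv_mul_gaussSum_pow (hχ₁ : χ₁ ≠ 1) {c : L} (hc : c ≠ 0) (m : ℕ) :
    ∑ j ∈ range (orderOf φ), gaussSum (φ ^ j)⁻¹ χ₁ *
        ((φ ^ j)⁻¹ c * ((-1) ^ m * gaussSum (φ ^ j) χ₁ ^ (m + 1))) =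
      1 + (-1) ^ m * Fintype.card L * ∑ j ∈ Ico 1 (orderOf φ),
        (φ ^ j) (-1) * gaussSum (φ ^ j) χ₁ ^ m * (φ ^ j)⁻¹ c := by
  rw [sum_range_eq_add_Ico _ φ.orderOf_pos, mul_sum]
  congr 1
  · rw [pow_zero, inv_one, gaussSum_one_left hχ₁, MulChar.one_apply hc.isUnit, pow_succ, one_mul,
      neg_one_mul, mul_neg_one, mul_neg, neg_neg, ← mul_pow, neg_one_mul, neg_neg, one_pow]
  · refine sum_congr rfl fun j hj ↦ ?_
    obtain ⟨hj1, hj2⟩ := mem_Ico.1 hj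
    have hne : φ ^ j ≠ 1 := pow_ne_one_of_lt_orderOf (by omega) hj2
    linear_combination (φ ^ j)⁻¹ c * (-1) ^ m * gaussSum (φ ^ j) χ₁ ^ m *
      gaussSum_inv_mul_gaussSum hne hχ₁

theorem orderOf_mul_sum_addChar_mul_norm_mul_trace [Algebra K M] [IsScalarTower K L M]
    (hcop : (Module.finrank L M).Coprime (Fintype.card K - 1))
    (hφ : orderOf φ = (Fintype.card L - 1) / (Fintype.card K - 1))
    {χ : AddChar K R} (hχ : χ ≠ 1) (hχ₁ : χ₁ ≠ 1) {a : K} (ha : a ≠ 0) {b : M} (hb : b ≠ 0) :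
    orderOf φ * ∑ x : M, ∑ y : Kˣ, ∑ z : Kˣ,
        χ (a * y) * χ₁ (algebraMap K L y * Algebra.norm L x) *
          χ₁ (Algebra.trace L M (b * (algebraMap K M z * x))) =
      -Fintype.card L * (1 + (-1) ^ (Module.finrank L M - 1) * ∑ j ∈ Ico 1 (orderOf φ),
        (φ ^ j) (-1) * gaussSum (φ ^ j) χ₁ ^ (Module.finrank L M - 1) *
          (φ ^ j)⁻¹ (Algebra.norm L b)) := by
  obtain ⟨m, hm⟩ := Nat.exists_eq_add_one_of_ne_zero
    (Module.finrank_pos (R := L) (M := M)).ne'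
  have hexpand := orderOf_mul_sum_sum_addChar_norm_mul_trace hφ hχ₁ hb
  rw [hm, Nat.add_sub_cancel,
    sum_range_gaussSum_inv_mul_gaussSum_pow hχ₁ (Algebra.norm_ne_zero_iff.2 hb)] at hexpand
  rw [sum_sum_sum_mul_norm_mul hcop (fun y ↦ χ (a * y)) χ₁
    fun x ↦ χ₁ (Algebra.trace L M (b * x)), sum_units_addChar_mul hχ ha, hm, Nat.add_sub_cancel]
  linear_combination -hexpand

lemma finrank_eq_div_of_card_eq_pow {L M : Type*} [Field L] [Field M] [Fintype L] [Fintype M]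
    [Algebra L M] {q f k : ℕ} (hL : Fintype.card L = q ^ f) (hM : Fintype.card M = q ^ k) :
    Module.finrank L M = k / f := by
  have hlt : 1 < q ^ f := hL ▸ Fintype.one_lt_card
  have hf : f ≠ 0 := by rintro rfl; exact hlt.ne' (pow_zero q)
  have hq : 1 < q := (Nat.one_lt_pow_iff hf).1 hlt
  have hcard := Module.card_eq_pow_finrank (K := L) (V := M)
  rw [hL, hM, ← pow_mul] at hcard
  rw [Nat.pow_right_injective hq hcard, Nat.mul_div_cancel_left _ (Nat.pos_of_ne_zero hf)]

end Main

section CanonicalCharacter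

/-- The canonical additive character `x ↦ exp (2πi Tr(x) / p)` of a finite field of
characteristic `p`, characterised by its values. -/
def IsCanonicalAddChar (p : ℕ) {F : Type*} [Field F] [Algebra (ZMod p) F]
    (χ : AddChar F ℂ) : Prop :=
  ∀ x : F, χ x =
    Complex.exp (2 * Real.pi * Complex.I * ((Algebra.trace (ZMod p) F x).val : ℂ) / p)

variable {p : ℕ} [Fact p.Prime]

lemma IsCanonicalAddChar.ne_one {F : Type*} [Field F] [Finite F] [Algebra (ZMod p) F]
    {χ : AddChar F ℂ} (hχ : IsCanonicalAddChar p χ) : χ ≠ 1 := by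
  have hp : p.Prime := Fact.out
  have : Fact (1 < p) := ⟨hp.one_lt⟩
  obtain ⟨x, hx⟩ := Algebra.trace_surjective (ZMod p) F 1
  refine AddChar.ne_one_iff.2 ⟨x, ?_⟩
  rw [hχ, hx, ZMod.val_one, Nat.cast_one, mul_one]
  exact (Complex.isPrimitiveRoot_exp p hp.ne_zero).ne_one hp.one_lt

lemma IsCanonicalAddChar.apply_eq_apply_trace {L M : Type*} [Field L] [Field M] [Finite M]
    [Algebra L M] [Algebra (ZMod p) L] [Algebra (ZMod p) M] {χ₁ : AddChar L ℂ} {χ₂ : AddChar M ℂ}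
    (hχ₁ : IsCanonicalAddChar p χ₁) (hχ₂ : IsCanonicalAddChar p χ₂) (x : M) :
    χ₂ x = χ₁ (Algebra.trace L M x) := by
  have : Finite L := .of_injective (algebraMap L M) (algebraMap L M).injective
  have : IsScalarTower (ZMod p) L M := .of_algebraMap_eq' (Subsingleton.elim _ _)
  rw [hχ₁, hχ₂, Algebra.trace_trace]

end CanonicalCharacter

theorem stmt10_general {q f k : ℕ} (hgcd : Nat.gcd (k / f) (q - 1) = 1)
    {Fq Ff Fk R : Type*} [Field Fq] [Field Ff] [Field Fk] [Field R] [CharZero R]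
    [Fintype Fq] [Fintype Ff] [Fintype Fk] [DecidableEq Fq]
    [Algebra Fq Ff] [Algebra Ff Fk] [Algebra Fq Fk] [IsScalarTower Fq Ff Fk]
    (hcq : Fintype.card Fq = q) (hcf : Fintype.card Ff = q ^ f) (hck : Fintype.card Fk = q ^ k)
    {χ : AddChar Fq R} (hχ : χ ≠ 1) {χ₁ : AddChar Ff R} (hχ₁ : χ₁ ≠ 1)
    {χ₂ : AddChar Fk R} (hχ₂ : ∀ x, χ₂ x = χ₁ (Algebra.trace Ff Fk x))
    {φ : MulChar Ff R} (hφ : orderOf φ = (q ^ f - 1) / (q - 1))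
    {a : Fq} (ha : a ≠ 0) {b : Fk} (hb : b ≠ 0) :
    ∑ x : Fk, ∑ y : Fqˣ, ∑ z : Fqˣ,
        χ (a * y) * χ₁ (algebraMap Fq Ff (y : Fq) * Algebra.norm Ff x) *
          χ₂ (b * algebraMap Fq Fk (z : Fq) * x)
      = (q : R) ^ f * (1 - q) / ((q : R) ^ f - 1) -
        (-1 : R) ^ (k / f - 1) * ((q : R) - 1) * (q : R) ^ f / ((q : R) ^ f - 1) *
          ∑ j ∈ Finset.Icc 1 ((q ^ f - 1) / (q - 1) - 1),
            (φ ^ j) (-1) * gaussSum (φ ^ j) χ₁ ^ (k / f - 1) * (φ ^ j)⁻¹ (Algebra.norm Ff b) := by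
  have hdeg := finrank_eq_div_of_card_eq_pow (L := Ff) (M := Fk) hcf hck
  have hone : 1 < q ^ f := hcf ▸ Fintype.one_lt_card
  have hmul : (orderOf φ : R) * (q - 1) = q ^ f - 1 := by
    have hdvd := card_sub_one_dvd_card_sub_one Fq Ff
    rw [hcq, hcf] at hdvd
    rw [← Nat.cast_pow, ← Nat.cast_pred hone.le, ← Nat.cast_pred (hcq ▸ Fintype.card_pos),
      ← Nat.cast_mul, hφ, Nat.div_mul_cancel hdvd]
  have hcore := orderOf_mul_sum_addChar_mul_norm_mul_trace (L := Ff) (by rwa [hdeg, hcq])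
    (by rwa [hcf, hcq]) hχ hχ₁ ha hb
  have hIcc : Finset.Icc 1 (orderOf φ - 1) = Finset.Ico 1 (orderOf φ) :=
    Finset.Icc_sub_one_right_eq_Ico_of_not_isMin φ.orderOf_pos.not_isMin 1
  have hne : (q : R) ^ f - 1 ≠ 0 := sub_ne_zero.2 (by exact_mod_cast hone.ne')
  simp only [hdeg, hcf, Nat.cast_pow, ← hχ₂, ← mul_assoc] at hcore
  rw [div_mul_eq_mul_div, ← sub_div, eq_div_iff hne, ← hmul, ← hφ, hIcc]
  linear_combination (q - 1 : R) * hcore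

/-- **Lemma 6, case `f > 1`.** Let `q` be a power of a prime `p`, `f ∣ k`,
`f > 1`, `gcd(k/f, q-1) = 1`.  With `χ, χ₁, χ₂` the canonical additive characters of
`F_q, F_{q^f}, F_{q^k}`, `a ∈ F_qˣ`,
`Λ(b) = ∑_{x ∈ F_{q^k}} ∑_{y ∈ F_qˣ} ∑_{z ∈ F_qˣ} χ(ay) χ₁(y·x^{(q^k-1)/(q^f-1)}) χ₂(bzx)`,
and `φ` a multiplicative character of `F_{q^f}ˣ` of order `(q^f-1)/(q-1)`, we have for
every `b ∈ F_{q^k}ˣ`: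
`Λ(b) = q^f(1-q)/(q^f-1) − ((-1)^{k/f-1}(q-1)q^f/(q^f-1)) ·
  ∑_{j=1}^{(q^f-1)/(q-1)-1} φ^j(-1) G(φ^j,χ₁)^{k/f-1} conj(φ^j)(b^{(q^k-1)/(q^f-1)})`.
Here `x^{(q^k-1)/(q^f-1)}` is the norm from `Fk` to `Ff` (hypothesis `hnorm`). -/
theorem stmt10 (p e q f k : ℕ) [Fact p.Prime] (he : 0 < e) (hq : q = p ^ e)
    (hf : 1 < f) (hfk : f ∣ k) (hgcd : Nat.gcd (k / f) (q - 1) = 1)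
    (Fq Ff Fk : Type) [Field Fq] [Field Ff] [Field Fk]
    [Fintype Fq] [Fintype Ff] [Fintype Fk] [DecidableEq Fq]
    [Algebra Fq Ff] [Algebra Ff Fk] [Algebra Fq Fk] [IsScalarTower Fq Ff Fk]
    [Algebra (ZMod p) Fq] [Algebra (ZMod p) Ff] [Algebra (ZMod p) Fk]
    (hcq : Fintype.card Fq = q) (hcf : Fintype.card Ff = q ^ f)
    (hck : Fintype.card Fk = q ^ k)
    (hnorm : ∀ x : Fk,
      algebraMap Ff Fk (Algebra.norm Ff x) = x ^ ((q ^ k - 1) / (q ^ f - 1)))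
    (χ : AddChar Fq ℂ)
    (hχ : ∀ x : Fq, χ x =
      Complex.exp (2 * Real.pi * Complex.I * ((Algebra.trace (ZMod p) Fq x).val : ℂ) / p))
    (χ₁ : AddChar Ff ℂ)
    (hχ₁ : ∀ x : Ff, χ₁ x =
      Complex.exp (2 * Real.pi * Complex.I * ((Algebra.trace (ZMod p) Ff x).val : ℂ) / p))
    (χ₂ : AddChar Fk ℂ)
    (hχ₂ : ∀ x : Fk, χ₂ x =
      Complex.exp (2 * Real.pi * Complex.I * ((Algebra.trace (ZMod p) Fk x).val : ℂ) / p))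
    (φ : MulChar Ff ℂ) (hφ : orderOf φ = (q ^ f - 1) / (q - 1))
    (a : Fq) (ha : a ≠ 0) (b : Fk) (hb : b ≠ 0) :
    ∑ x : Fk, ∑ y : Fqˣ, ∑ z : Fqˣ,
        χ (a * y) * χ₁ (algebraMap Fq Ff (y : Fq) * Algebra.norm Ff x) *
          χ₂ (b * algebraMap Fq Fk (z : Fq) * x)
      = (q : ℂ) ^ f * (1 - q) / ((q : ℂ) ^ f - 1) -
        (-1 : ℂ) ^ (k / f - 1) * ((q : ℂ) - 1) * (q : ℂ) ^ f / ((q : ℂ) ^ f - 1) *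
          ∑ j ∈ Finset.Icc 1 ((q ^ f - 1) / (q - 1) - 1),
            (φ ^ j) (-1) * gaussSum (φ ^ j) χ₁ ^ (k / f - 1) *
              (starRingEnd ℂ) ((φ ^ j) (Algebra.norm Ff b)) := by
  simpa only [starRingEnd_apply, MulChar.star_apply'] using stmt10_general hgcd hcq hcf hck
    (IsCanonicalAddChar.ne_one hχ) (IsCanonicalAddChar.ne_one hχ₁)
    (IsCanonicalAddChar.apply_eq_apply_trace hχ₁ hχ₂) hφ ha hb
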